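/- arXiv:2010.14172 — 2 statements merged into one kernel-verified Lean document; each statement's English description precedes it below -/
import Mathlib

section
/- Fix an integer d ≥ 0, odd integers n, m ≥ 1, and arbitrary functions f_1,…,f_n : ℂ^{d+1} → ℝ and g_1,…,g_m : ℂ^{d+1} → ℝ. Define F : (ℂ^{d+1})^n → ℝ by F(w) := ∑_{k=1}^n f_k(w_k) + R_n(w), define G : (ℂ^{d+1})^m → ℝ by G(w') := ∑_{l=1}^m g_l(w'_l) + R_m(w'), and define H : (ℂ^{d+1})^{n+m+1} → ℝ by H(u) := ∑_{j=1}^{n+m+1} h_j(u_j) + R_{n+m+1}(u), where h_j := f_j for 1 ≤ j ≤ n, h_{n+1} := 0, and h_{n+1+l} := g_l for 1 ≤ l ≤ m. Then H(B̃_{n,m}(w,w')) = F(w) + G(w') for all w, w'. Consequently, B̃_{n,m} is injective and, for all a, b ∈ ℝ, it maps the product of sublevel sets {F ≤ a} × {G ≤ b} injectively into the sublevel set {H ≤ a+b}. -/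
/-!
Put `ω(z, w) = ⟨z, i w⟩`, an alternating real bilinear form, and `v_k = (-1)^k w_k`
(indices start at `0`), so that `R_N(w) = 2 ∑_{l < k < N} ω(v_k, v_l)`.

For `u = B̃(w, w')` with `n` odd, the signed sequence of `u` consists of the signed sequence of
`w`, then `-S`, then the signed sequence of `w'`, where `S = ∑ (-1)^k w'_k`: the `n` entries and
the inserted one shift the tail by the even number `n + 1`. With `A = ∑ (-1)^k w_k`, the terms of
`R_{n+m+1}(u)` beyond those of `R_n(w)` and `R_m(w')` are `2` times
`ω(-S, A) + ω(S, A) + ω(S, -S) = 0` (`pairSum_insert`). The fibre terms match because the inserted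
function is `0`. Injectivity holds since `w` and `w'` can be read off from `B̃(w, w')`.
-/

open scoped BigOperators

/-- The real inner product `⟨z,w⟩ = Re ∑ z_j conj (w_j)` on `ℂ^{d+1}`. -/
noncomputable def rinner {d : ℕ} (z w : Fin (d + 1) → ℂ) : ℝ :=
  ∑ j, (z j * (starRingEnd ℂ) (w j)).re

/-- The quadratic form `R_j(w) = 2 ∑_{k} ∑_{l<k} (−1)^{k+l} ⟨w_k, i w_l⟩`. -/
noncomputable def Rform (d j : ℕ) (w : Fin j → (Fin (d + 1) → ℂ)) : ℝ :=
  2 * ∑ k : Fin j, ∑ l ∈ Finset.Iio k,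
    (-1 : ℝ) ^ ((k : ℕ) + (l : ℕ)) * rinner (w k) (Complex.I • w l)

/-- The map `B̃_{n,m}(w,w') = (w_1,…,w_n, ∑ (−1)^{k+1} w'_k, w'_1,…,w'_m)`. -/
noncomputable def Btilde (d n m : ℕ) (w : Fin n → (Fin (d + 1) → ℂ))
    (w' : Fin m → (Fin (d + 1) → ℂ)) : Fin (n + m + 1) → (Fin (d + 1) → ℂ) :=
  fun j =>
    if h : (j : ℕ) < n then w ⟨j, h⟩
    else if h' : (j : ℕ) = n then ∑ k : Fin m, ((-1 : ℂ) ^ (k : ℕ)) • w' k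
    else w' ⟨(j : ℕ) - (n + 1), by have := j.isLt; omega⟩

/-- A "generating function"-type functional `∑ h_k(w_k) + R_N(w)`. -/
noncomputable def sumR (d N : ℕ) (h : Fin N → ((Fin (d + 1) → ℂ) → ℝ))
    (w : Fin N → (Fin (d + 1) → ℂ)) : ℝ :=
  (∑ k : Fin N, h k (w k)) + Rform d N w

/-- The combined family `(f_1,…,f_n, 0, g_1,…,g_m)` of fiber functions. -/
noncomputable def hcomb (d n m : ℕ) (f : Fin n → ((Fin (d + 1) → ℂ) → ℝ))
    (g : Fin m → ((Fin (d + 1) → ℂ) → ℝ)) : Fin (n + m + 1) → ((Fin (d + 1) → ℂ) → ℝ) :=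
  fun j =>
    if h : (j : ℕ) < n then f ⟨j, h⟩
    else if h' : (j : ℕ) = n then 0
    else g ⟨(j : ℕ) - (n + 1), by have := j.isLt; omega⟩

/-- The alternating real bilinear form `ω(z, w) = ⟨z, i w⟩`. -/
noncomputable def omegaForm (d : ℕ) :
    (Fin (d + 1) → ℂ) →ₗ[ℝ] (Fin (d + 1) → ℂ) →ₗ[ℝ] ℝ :=
  LinearMap.mk₂ ℝ (fun z w => rinner z (Complex.I • w))
    (by intro a b c
        simp only [rinner, ← Finset.sum_add_distrib]
        refine Finset.sum_congr rfl fun j _ => ?_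
        simp
        ring)
    (by intro r a b
        simp only [rinner, smul_eq_mul, Finset.mul_sum]
        refine Finset.sum_congr rfl fun j _ => ?_
        simp
        ring)
    (by intro a b c
        simp only [rinner, ← Finset.sum_add_distrib]
        refine Finset.sum_congr rfl fun j _ => ?_
        simp
        ring)
    (by intro r a b
        simp only [rinner, smul_eq_mul, Finset.mul_sum]
        refine Finset.sum_congr rfl fun j _ => ?_
        simp
        ring)

lemma omegaForm_apply {d : ℕ} (z w : Fin (d + 1) → ℂ) :
    omegaForm d z w = rinner z (Complex.I • w) := rfl

lemma omegaForm_self {d : ℕ} (z : Fin (d + 1) → ℂ) : omegaForm d z z = 0 := by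
  rw [omegaForm_apply, rinner]
  refine Finset.sum_eq_zero fun j _ => ?_
  simp
  ring

/-- The sum `∑_{l < k < N} ω(v_k, v_l)`. -/
noncomputable def pairSum (d N : ℕ) (v : ℕ → (Fin (d + 1) → ℂ)) : ℝ :=
  ∑ k ∈ Finset.range N, ∑ l ∈ Finset.range k, omegaForm d (v k) (v l)

/-- `R_N` in terms of any sequence on `ℕ` which agrees with `(-1)^k w_k` for `k < N`. -/
lemma Rform_eq_pairSum {d N : ℕ} (w : Fin N → (Fin (d + 1) → ℂ)) (v : ℕ → (Fin (d + 1) → ℂ))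
    (hv : ∀ k : Fin N, v k = ((-1 : ℝ) ^ (k : ℕ)) • w k) :
    Rform d N w = 2 * pairSum d N v := by
  unfold Rform pairSum
  rw [← Fin.sum_univ_eq_sum_range (fun k => ∑ l ∈ Finset.range k, omegaForm d (v k) (v l))]
  congr 1
  refine Finset.sum_congr rfl fun k _ => ?_
  have hmap : Finset.range (k : ℕ) = (Finset.Iio k).map Fin.valEmbedding := by
    rw [Fin.map_valEmbedding_Iio, Nat.Iio_eq_range]
  rw [hmap, Finset.sum_map]
  refine Finset.sum_congr rfl fun l _ => ?_
  rw [Fin.valEmbedding_apply, hv k, hv l, map_smul, map_smul, LinearMap.smul_apply,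
    omegaForm_apply, smul_eq_mul, smul_eq_mul, pow_add]
  ring

/-- An entry equal to minus the sum of all later entries makes the pair sum split: the cross terms
are `ω(-S, A) + ω(S, A) + ω(S, -S) = 0`. -/
lemma pairSum_insert {d n m : ℕ} (v : ℕ → (Fin (d + 1) → ℂ))
    (hv : v n = -∑ k ∈ Finset.range m, v (n + 1 + k)) :
    pairSum d (n + 1 + m) v = pairSum d n v + pairSum d m (fun k => v (n + 1 + k)) := by
  unfold pairSum
  rw [Finset.sum_range_add, Finset.sum_range_succ]
  simp_rw [Finset.sum_range_add _ (n + 1), Finset.sum_add_distrib, Finset.sum_range_succ _ n,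
    ← map_sum, ← map_add]
  have hS : ∀ x, ∑ k ∈ Finset.range m, omegaForm d (v (n + 1 + k)) x
      = -omegaForm d (v n) x := by
    intro x
    rw [hv]
    simp
  rw [hS, map_add, omegaForm_self]
  ring

lemma sum_fin_split {n m : ℕ} (φ : Fin (n + m + 1) → ℝ) :
    ∑ j, φ j = ∑ i : Fin n, φ ⟨i, by omega⟩
      + (φ ⟨n, by omega⟩ + ∑ k : Fin m, φ ⟨n + 1 + k, by omega⟩) := by
  have h := Fin.sum_univ_add (a := n) (b := m + 1) φ
  rw [Fin.sum_univ_succ] at h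
  refine h.trans ?_
  congr 3
  ext k
  congr 1
  ext
  simp
  omega

lemma Btilde_left {d n m : ℕ} (w : Fin n → (Fin (d + 1) → ℂ)) (w' : Fin m → (Fin (d + 1) → ℂ))
    (i : Fin n) : Btilde d n m w w' ⟨i, by omega⟩ = w i := by
  simp [Btilde]

lemma Btilde_mid {d n m : ℕ} (w : Fin n → (Fin (d + 1) → ℂ)) (w' : Fin m → (Fin (d + 1) → ℂ)) :
    Btilde d n m w w' ⟨n, by omega⟩ = ∑ k : Fin m, ((-1 : ℂ) ^ (k : ℕ)) • w' k := by
  simp [Btilde]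

lemma Btilde_right {d n m : ℕ} (w : Fin n → (Fin (d + 1) → ℂ)) (w' : Fin m → (Fin (d + 1) → ℂ))
    (k : Fin m) : Btilde d n m w w' ⟨n + 1 + k, by omega⟩ = w' k := by
  have h1 : ¬ (n + 1 + (k : ℕ) < n) := by omega
  have h2 : ¬ (n + 1 + (k : ℕ) = n) := by omega
  simp [Btilde, h1, h2]

lemma sum_hcomb_Btilde {d n m : ℕ} (f : Fin n → ((Fin (d + 1) → ℂ) → ℝ))
    (g : Fin m → ((Fin (d + 1) → ℂ) → ℝ)) (w : Fin n → (Fin (d + 1) → ℂ))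
    (w' : Fin m → (Fin (d + 1) → ℂ)) :
    ∑ j, hcomb d n m f g j (Btilde d n m w w' j) = ∑ k, f k (w k) + ∑ l, g l (w' l) := by
  have h1 : ∀ k : ℕ, ¬ (n + 1 + k < n) := by omega
  have h2 : ∀ k : ℕ, ¬ (n + 1 + k = n) := by omega
  rw [sum_fin_split]
  simp_rw [Btilde_left, Btilde_right]
  simp [hcomb, h1, h2]

/-- Apply `pairSum_insert` to the signed sequence of `Btilde d n m w w'`, extended by zero to `ℕ`. -/
lemma Rform_Btilde {d n m : ℕ} (hn : Odd n) (w : Fin n → (Fin (d + 1) → ℂ))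
    (w' : Fin m → (Fin (d + 1) → ℂ)) :
    Rform d (n + m + 1) (Btilde d n m w w') = Rform d n w + Rform d m w' := by
  let v : ℕ → (Fin (d + 1) → ℂ) := fun k =>
    if h : k < n + m + 1 then ((-1 : ℝ) ^ k) • Btilde d n m w w' ⟨k, h⟩ else 0
  have hvB : ∀ k (h : k < n + m + 1), v k = ((-1 : ℝ) ^ k) • Btilde d n m w w' ⟨k, h⟩ :=
    fun k h => dif_pos h
  have hvl : ∀ k : Fin n, v k = ((-1 : ℝ) ^ (k : ℕ)) • w k := by
    intro k
    rw [hvB k (by omega), Btilde_left]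
  have hvr : ∀ k : Fin m, v (n + 1 + k) = ((-1 : ℝ) ^ (k : ℕ)) • w' k := by
    intro k
    rw [hvB _ (by omega), Btilde_right, pow_add, hn.add_one.neg_one_pow, one_mul]
  have hvn : v n = -∑ k ∈ Finset.range m, v (n + 1 + k) := by
    rw [hvB n (by omega), Btilde_mid, hn.neg_one_pow, neg_smul, one_smul,
      ← Fin.sum_univ_eq_sum_range (fun k => v (n + 1 + k))]
    congr 1
    refine Finset.sum_congr rfl fun k _ => ?_
    rw [hvr]
    ext j
    simp
  rw [Rform_eq_pairSum _ v (fun k => hvB k k.2), Rform_eq_pairSum w v hvl,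
    Rform_eq_pairSum w' (fun k => v (n + 1 + k)) hvr, ← mul_add, ← pairSum_insert v hvn,
    Nat.add_right_comm]

/-- With `F(w) = ∑ f_k(w_k) + R_n(w)`, `G(w') = ∑ g_l(w'_l) + R_m(w')` and
`H(u) = ∑ h_j(u_j) + R_{n+m+1}(u)` (where `h = (f_1,…,f_n,0,g_1,…,g_m)`), one has
`H(B̃_{n,m}(w,w')) = F(w) + G(w')`; consequently `B̃_{n,m}` is injective and maps
`{F ≤ a} × {G ≤ b}` (injectively) into `{H ≤ a + b}`. -/
theorem Btilde_sublevel (d n m : ℕ) (hn : Odd n) (hm : Odd m)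
    (f : Fin n → ((Fin (d + 1) → ℂ) → ℝ)) (g : Fin m → ((Fin (d + 1) → ℂ) → ℝ)) :
    (∀ (w : Fin n → (Fin (d + 1) → ℂ)) (w' : Fin m → (Fin (d + 1) → ℂ)),
        sumR d (n + m + 1) (hcomb d n m f g) (Btilde d n m w w')
          = sumR d n f w + sumR d m g w')
    ∧ Function.Injective
        (fun p : (Fin n → (Fin (d + 1) → ℂ)) × (Fin m → (Fin (d + 1) → ℂ)) =>
          Btilde d n m p.1 p.2)
    ∧ (∀ (a b : ℝ) (w : Fin n → (Fin (d + 1) → ℂ)) (w' : Fin m → (Fin (d + 1) → ℂ)),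
        sumR d n f w ≤ a → sumR d m g w' ≤ b →
          sumR d (n + m + 1) (hcomb d n m f g) (Btilde d n m w w') ≤ a + b) := by
  have key : ∀ (w : Fin n → (Fin (d + 1) → ℂ)) (w' : Fin m → (Fin (d + 1) → ℂ)),
      sumR d (n + m + 1) (hcomb d n m f g) (Btilde d n m w w')
        = sumR d n f w + sumR d m g w' := by
    intro w w'
    unfold sumR
    rw [sum_hcomb_Btilde, Rform_Btilde hn]
    ring
  refine ⟨key, ?_, ?_⟩
  · rintro ⟨w₁, w₁'⟩ ⟨w₂, w₂'⟩ h
    simp only at h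
    refine Prod.ext (funext fun i => ?_) (funext fun k => ?_)
    · simpa only [Btilde_left] using congrFun h ⟨i, by omega⟩
    · simpa only [Btilde_right] using congrFun h ⟨n + 1 + k, by omega⟩
  · intro a b w w' hF hG
    rw [key]
    exact add_le_add hF hG
end

section
/- Fix integers d ≥ 0 and n ≥ 1 with n odd. For all w = (w_1,…,w_n) ∈ (ℂ^{d+1})^n and all w' ∈ ℂ^{d+1}: R_{2n+1}(w_1,…,w_n, w', −w_1,…,−w_n) = 2 R_n(w_1,…,w_n) + 4 ⟨∑_{k=1}^{n} (−1)^{k+1} w_k, i w'⟩. -/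
/-!
Write `B(x, y) = ⟨x, i y⟩`, an alternating real bilinear form. Splitting the indices
of `R_{2n+1}` into the first block, the middle entry and the last block gives five
contributions. The pairs inside the first block and those inside the last block each
give `R_n(w)`. The pairs joining the two blocks sum to `-∑_{k,l} (-1)^{k+l} B(w_k, w_l)`
over all `k, l`, which vanishes because `B` is alternating. The middle entry paired
with either block gives `2 B(∑ (-1)^k w_k, w')`, the signs agreeing because `n` is odd.

The splitting is carried out on `ℕ`-indexed sequences, where blocks of indices are
ranges; `Rform_eq_range` passes to that form.
-/

open scoped BigOperators

lemma rinner_I_swap {d : ℕ} (x y : Fin (d + 1) → ℂ) :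
    rinner x (Complex.I • y) = -rinner y (Complex.I • x) := by
  unfold rinner
  rw [← Finset.sum_neg_distrib]
  refine Finset.sum_congr rfl fun j _ => ?_
  simp
  ring

lemma rinner_neg_left {d : ℕ} (x y : Fin (d + 1) → ℂ) :
    rinner (-x) y = -rinner x y := by
  unfold rinner
  rw [← Finset.sum_neg_distrib]
  refine Finset.sum_congr rfl fun j _ => ?_
  simp

lemma rinner_neg_I_neg {d : ℕ} (x y : Fin (d + 1) → ℂ) :
    rinner (-x) (Complex.I • -y) = rinner x (Complex.I • y) := by
  rw [rinner_neg_left, rinner_I_swap, rinner_neg_left, rinner_I_swap x]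
  ring

lemma rinner_alternating_sum {d n : ℕ} (w : ℕ → Fin (d + 1) → ℂ) (y : Fin (d + 1) → ℂ) :
    rinner (∑ k ∈ Finset.range n, ((-1 : ℂ) ^ k) • w k) y
      = ∑ k ∈ Finset.range n, (-1 : ℝ) ^ k * rinner (w k) y := by
  unfold rinner
  simp only [Finset.mul_sum]
  rw [Finset.sum_comm]
  refine Finset.sum_congr rfl fun j _ => ?_
  rw [Finset.sum_apply, Finset.sum_mul, Complex.re_sum]
  refine Finset.sum_congr rfl fun k _ => ?_
  rcases Nat.even_or_odd k with hk | hk <;> simp [hk.neg_one_pow]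

lemma Rform_eq_range (d j : ℕ) (w : Fin j → Fin (d + 1) → ℂ) (f : ℕ → Fin (d + 1) → ℂ)
    (hf : ∀ k : Fin j, w k = f k) :
    Rform d j w = 2 * ∑ k ∈ Finset.range j, ∑ l ∈ Finset.range k,
      (-1 : ℝ) ^ (k + l) * rinner (f k) (Complex.I • f l) := by
  unfold Rform
  rw [Finset.sum_range]
  congr 1
  refine Finset.sum_congr rfl fun k _ => ?_
  rw [← Nat.Iio_eq_range, ← Fin.map_valEmbedding_Iio, Finset.sum_map]
  simp [hf]

/-- The cross terms between the two blocks cancel because the summand is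
antisymmetric in `(k, l)`. -/
lemma cross_sum_eq_zero {d : ℕ} (n : ℕ) (u : ℕ → Fin (d + 1) → ℂ) :
    ∑ k ∈ Finset.range n, ∑ l ∈ Finset.range n,
      (-1 : ℝ) ^ (k + l) * rinner (u k) (Complex.I • u l) = 0 := by
  have h : ∑ k ∈ Finset.range n, ∑ l ∈ Finset.range n,
      (-1 : ℝ) ^ (k + l) * rinner (u k) (Complex.I • u l)
      = -∑ k ∈ Finset.range n, ∑ l ∈ Finset.range n,
      (-1 : ℝ) ^ (k + l) * rinner (u k) (Complex.I • u l) := by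
    conv_lhs => rw [Finset.sum_comm]
    simp only [← Finset.sum_neg_distrib]
    refine Finset.sum_congr rfl fun k _ => Finset.sum_congr rfl fun l _ => ?_
    rw [rinner_I_swap, add_comm l k]
    ring
  linarith

/-- The identity for `ℕ`-indexed sequences: `f` is the concatenation of
`u 0, …, u (n-1)`, the middle entry `y`, and `-u 0, …, -u (n-1)`. -/
lemma range_symmetric_square {d n : ℕ} (hn : Odd n) (u f : ℕ → Fin (d + 1) → ℂ)
    (y : Fin (d + 1) → ℂ) (h1 : ∀ k < n, f k = u k) (h2 : f n = y)
    (h3 : ∀ k < n, f (n + 1 + k) = -u k) :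
    ∑ k ∈ Finset.range (2 * n + 1), ∑ l ∈ Finset.range k,
      (-1 : ℝ) ^ (k + l) * rinner (f k) (Complex.I • f l)
    = 2 * (∑ k ∈ Finset.range n, ∑ l ∈ Finset.range k,
        (-1 : ℝ) ^ (k + l) * rinner (u k) (Complex.I • u l))
      + 2 * ∑ k ∈ Finset.range n, (-1 : ℝ) ^ k * rinner (u k) (Complex.I • y) := by
  have first : ∑ k ∈ Finset.range n, ∑ l ∈ Finset.range k,
      (-1 : ℝ) ^ (k + l) * rinner (f k) (Complex.I • f l)
      = ∑ k ∈ Finset.range n, ∑ l ∈ Finset.range k,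
        (-1 : ℝ) ^ (k + l) * rinner (u k) (Complex.I • u l) := by
    refine Finset.sum_congr rfl fun k hk => Finset.sum_congr rfl fun l hl => ?_
    rw [Finset.mem_range] at hk hl
    rw [h1 k hk, h1 l (hl.trans hk)]
  have middle : ∑ l ∈ Finset.range n, (-1 : ℝ) ^ (n + l) * rinner (f n) (Complex.I • f l)
      = ∑ k ∈ Finset.range n, (-1 : ℝ) ^ k * rinner (u k) (Complex.I • y) := by
    refine Finset.sum_congr rfl fun l hl => ?_
    rw [h1 l (Finset.mem_range.mp hl), h2, rinner_I_swap, pow_add, hn.neg_one_pow]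
    ring
  have last : ∀ k ∈ Finset.range n, ∑ l ∈ Finset.range (n + 1 + k),
      (-1 : ℝ) ^ (n + 1 + k + l) * rinner (f (n + 1 + k)) (Complex.I • f l)
      = -(∑ l ∈ Finset.range n, (-1 : ℝ) ^ (k + l) * rinner (u k) (Complex.I • u l))
        + (-1 : ℝ) ^ k * rinner (u k) (Complex.I • y)
        + ∑ l ∈ Finset.range k, (-1 : ℝ) ^ (k + l) * rinner (u k) (Complex.I • u l) := by
    intro k hk
    rw [Finset.mem_range] at hk
    rw [Finset.sum_range_add, Finset.sum_range_succ, h3 k hk, h2, ← Finset.sum_neg_distrib]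
    congr 1
    · congr 1
      · refine Finset.sum_congr rfl fun l hl => ?_
        rw [h1 l (Finset.mem_range.mp hl), rinner_neg_left]
        simp only [pow_add, hn.neg_one_pow]
        ring
      · rw [rinner_neg_left]
        simp only [pow_add, hn.neg_one_pow]
        ring
    · refine Finset.sum_congr rfl fun l hl => ?_
      rw [h3 l ((Finset.mem_range.mp hl).trans hk), rinner_neg_I_neg]
      simp only [pow_add, hn.neg_one_pow]
      ring
  rw [show 2 * n + 1 = n + 1 + n by ring, Finset.sum_range_add, Finset.sum_range_succ,
    first, middle, Finset.sum_congr rfl last, Finset.sum_add_distrib,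
    Finset.sum_add_distrib, Finset.sum_neg_distrib, cross_sum_eq_zero]
  ring

/-- For odd `n`, `R_{2n+1}(w_1,…,w_n, w', −w_1,…,−w_n)
  = 2 R_n(w) + 4 ⟨∑ (−1)^{k+1} w_k, i w'⟩` (in 0-based indexing the alternating
sum is `∑ (−1)^k w_k`). -/
theorem Rform_symmetric_square (d n : ℕ) (hn : Odd n)
    (w : Fin n → (Fin (d + 1) → ℂ)) (w' : Fin (d + 1) → ℂ) :
    Rform d (2 * n + 1) (fun j =>
        if h : (j : ℕ) < n then w ⟨j, h⟩
        else if h' : (j : ℕ) = n then w'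
        else - w ⟨(j : ℕ) - (n + 1), by have := j.isLt; omega⟩)
      = 2 * Rform d n w
        + 4 * rinner (∑ k : Fin n, ((-1 : ℂ) ^ (k : ℕ)) • w k) (Complex.I • w') := by
  -- Extension of `w` by zero to all of `ℕ`; the values from `n` on are never used.
  let u : ℕ → Fin (d + 1) → ℂ := fun k => if h : k < n then w ⟨k, h⟩ else 0
  let f : ℕ → Fin (d + 1) → ℂ := fun k =>
    if k < n then u k else if k = n then w' else -u (k - (n + 1))
  have hu : ∀ k : Fin n, w k = u k := fun k => by simp [u]
  rw [Rform_eq_range d n w u hu, Rform_eq_range d (2 * n + 1) _ f,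
    range_symmetric_square hn u f w', ← rinner_alternating_sum]
  · rw [Finset.sum_range fun k => ((-1 : ℂ) ^ k) • u k]
    simp only [← hu]
    ring
  · intro k hk
    simp [f, hk]
  · simp [f]
  · intro k _
    have ha : ¬ n + 1 + k < n := by omega
    have hb : ¬ n + 1 + k = n := by omega
    simp [f, ha, hb]
  · intro k
    have hk := k.isLt
    by_cases ha : (k : ℕ) < n
    · simp [f, u, ha]
    · by_cases hb : (k : ℕ) = n
      · simp [f, hb]
      · have hc : (k : ℕ) - (n + 1) < n := by omega
        simp [f, u, ha, hb, hc]
end
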